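/- Let α ∈ (0,1), β > 0, γ > 0, λ > 0, and let E^γ_{α,β}(z) = (1/Γ(γ)) Σ_{n=0}^∞ Γ(γ+n) z^n / (n! Γ(αn+β)) be the Prabhakar function. Then for Re s > 0, the Laplace transform of t ↦ t^{β−1} E^γ_{α,β}(−λ t^α) equals s^{αγ−β} / (s^α + λ)^γ, where powers of s are principal powers. -/

import Mathlib

open MeasureTheory Complex Real

/-- The Prabhakar (three-parameter Mittag-Leffler) function with real parameters. -/
noncomputable def prabhakar (α β γ : ℝ) (z : ℂ) : ℂ :=
  ((Real.Gamma γ)⁻¹ : ℝ) *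
    ∑' n : ℕ, ((Real.Gamma (γ + n) / (n.factorial * Real.Gamma (α * n + β)) : ℝ) : ℂ) * z ^ n

/-!
For large real `s` the Prabhakar series can be integrated term by term, and the binomial series for
`(1 + lam s ^ (-α)) ^ (-γ)` sums the result. By the identity theorem the formula then holds on every
right half-plane on which the transform converges absolutely, so the point is to show that the
kernel `t ^ (β - 1) E^γ_{α,β}(-lam t ^ α)` grows more slowly than `exp (a t)` for each `a > 0`.

If `β > 1`, the closed form decays like `|s| ^ (-β)` on vertical lines, hence is integrable there:
Bromwich's inversion formula recovers the kernel from it, and moving the contour to `Re s = a` gives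
the bound `C exp (a t)`. The case `0 < β ≤ 1` reduces to this one by the recurrence
`E^γ_{α,β}(z) = β E^γ_{α,β+1}(z) + α γ z E^{γ+1}_{α,β+1+α}(z)`.
-/

section Laplace

open Set Filter Topology FourierTransform

variable {E : Type*} [NormedAddCommGroup E]

theorem verticalIntegrable_of_norm_le {G : ℂ → E} {c p K : ℝ} (hp : 1 < p)
    (hcont : ContinuousOn G {s : ℂ | s.re = c})
    (hG : ∀ s : ℂ, s.re = c → ‖G s‖ ≤ K * (1 + |s.im|) ^ (-p)) : VerticalIntegrable G c := by
  have hline : Continuous fun y : ℝ ↦ G (c + y * I) :=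
    hcont.comp_continuous (by fun_prop) fun y ↦ by simp
  refine ((integrable_one_add_norm (by simpa using hp)).const_mul K).mono'
    hline.aestronglyMeasurable (.of_forall fun y ↦ ?_)
  simpa using hG (c + y * I) (by simp)

variable [NormedSpace ℂ E] {f : ℝ → E} {s w : ℂ}

/-- Absolute convergence at `s` of the one-sided Laplace transform, the analogue of
`MellinConvergent`. -/
def LaplaceConvergent (f : ℝ → E) (s : ℂ) : Prop :=
  IntegrableOn (fun t : ℝ ↦ cexp (-s * t) • f t) (Ioi 0)

/-- The one-sided Laplace transform, the analogue of `mellin`; its values are meaningful where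
`LaplaceConvergent f s` holds. -/
noncomputable def laplaceTransform (f : ℝ → E) (s : ℂ) : E :=
  ∫ t in Ioi (0 : ℝ), cexp (-s * t) • f t

theorem norm_cexp_neg_mul_ofReal (s : ℂ) (t : ℝ) : ‖cexp (-s * t)‖ = rexp (-s.re * t) := by
  simp [Complex.norm_exp]

namespace LaplaceConvergent

theorem aestronglyMeasurable (hf : LaplaceConvergent f s) :
    AEStronglyMeasurable f (volume.restrict (Ioi 0)) := by
  have h := (by fun_prop : Continuous fun t : ℝ ↦ cexp (s * t)).aestronglyMeasurable.smul
    (Integrable.aestronglyMeasurable hf)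
  refine h.congr (.of_forall fun t ↦ ?_)
  simp [smul_smul, ← Complex.exp_add]

theorem aestronglyMeasurable_cexp_smul (hf : LaplaceConvergent f s) (w : ℂ) :
    AEStronglyMeasurable (fun t : ℝ ↦ cexp (-w * t) • f t) (volume.restrict (Ioi 0)) :=
  (by fun_prop : Continuous fun t : ℝ ↦ cexp (-w * t)).aestronglyMeasurable.smul
    hf.aestronglyMeasurable

theorem mono (hf : LaplaceConvergent f s) (hsw : s.re ≤ w.re) : LaplaceConvergent f w := by
  refine Integrable.mono hf (hf.aestronglyMeasurable_cexp_smul w) ?_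
  filter_upwards [ae_restrict_mem measurableSet_Ioi] with t (ht : 0 < t)
  rw [norm_smul, norm_smul, norm_cexp_neg_mul_ofReal, norm_cexp_neg_mul_ofReal]
  gcongr

theorem of_norm_le_exp {a C : ℝ} (hf : LaplaceConvergent f s)
    (hC : ∀ t : ℝ, 1 ≤ t → ‖f t‖ ≤ C * rexp (a * t)) (ha : a < w.re) :
    LaplaceConvergent f w := by
  rw [LaplaceConvergent, ← Ioc_union_Ioi_eq_Ioi zero_le_one]
  refine IntegrableOn.union ?_ ?_
  · have hIcc : IntegrableOn (fun t : ℝ ↦ cexp (-s * t) • f t) (Icc 0 1) :=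
      (integrableOn_Icc_iff_integrableOn_Ioc).2 (IntegrableOn.mono_set hf Ioc_subset_Ioi_self)
    have h := hIcc.continuousOn_smul
      (by fun_prop : Continuous fun t : ℝ ↦ cexp ((s - w) * t)).continuousOn isCompact_Icc
    refine (h.mono_set Ioc_subset_Icc_self).congr_fun (fun t _ ↦ ?_) measurableSet_Ioc
    simp only [smul_smul, ← Complex.exp_add]
    ring_nf
  · have hexp := (integrableOn_exp_mul_Ioi (a := -(w.re - a)) (by linarith) 1).const_mul C
    refine hexp.mono' ((hf.aestronglyMeasurable_cexp_smul w).mono_set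
      (Ioi_subset_Ioi zero_le_one)) ?_
    filter_upwards [ae_restrict_mem measurableSet_Ioi] with t (ht : 1 < t)
    calc ‖cexp (-w * t) • f t‖ = rexp (-w.re * t) * ‖f t‖ := by
          rw [norm_smul, norm_cexp_neg_mul_ofReal]
      _ ≤ rexp (-w.re * t) * (C * rexp (a * t)) := by gcongr; exact hC t ht.le
      _ = C * rexp (-(w.re - a) * t) := by
          rw [mul_left_comm, ← Real.exp_add]
          ring_nf

end LaplaceConvergent

theorem mul_exp_neg_mul_le_inv {d : ℝ} (hd : 0 < d) (t : ℝ) : t * rexp (-d * t) ≤ d⁻¹ := by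
  have h : d * t ≤ rexp (d * t) := by linarith [Real.add_one_le_exp (d * t)]
  rw [neg_mul, Real.exp_neg, ← div_eq_mul_inv, div_le_iff₀ (Real.exp_pos _), inv_mul_eq_div,
    le_div_iff₀ hd]
  linarith

theorem differentiableOn_laplaceTransform {c : ℝ}
    (hf : ∀ s : ℂ, c < s.re → LaplaceConvergent f s) :
    DifferentiableOn ℂ (laplaceTransform f) {s : ℂ | c < s.re} := by
  intro s (hs : c < s.re)
  obtain ⟨d, hd, hds⟩ : ∃ d > 0, c < s.re - 2 * d :=
    ⟨(s.re - c) / 3, by linarith, by linarith⟩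
  have hmeas := (hf s hs).aestronglyMeasurable_cexp_smul
  refine (hasDerivAt_integral_of_dominated_loc_of_deriv_le
    (F := fun (w : ℂ) (t : ℝ) ↦ cexp (-w * t) • f t)
    (F' := fun (w : ℂ) (t : ℝ) ↦ -(t : ℂ) • cexp (-w * t) • f t)
    (bound := fun t : ℝ ↦ d⁻¹ * ‖cexp (-(s - 2 * d) * t) • f t‖)
    (Metric.ball_mem_nhds s hd) (.of_forall hmeas) (hf s hs)
    ((by fun_prop : Continuous fun t : ℝ ↦ -(t : ℂ)).aestronglyMeasurable.smul (hmeas s))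
    ?_ ((Integrable.norm (hf (s - 2 * d) (by simpa using hds))).const_mul _)
    (.of_forall fun t w _ ↦ ?_)).2.differentiableAt.differentiableWithinAt
  · filter_upwards [ae_restrict_mem measurableSet_Ioi] with t (ht : 0 < t) w hw
    have hre : s.re - d ≤ w.re := by
      have h := (abs_lt.1 ((abs_re_le_norm (w - s)).trans_lt (mem_ball_iff_norm.1 hw))).1
      rw [sub_re] at h
      linarith
    have hexp : t * rexp (-w.re * t) ≤ d⁻¹ * rexp (-(s.re - 2 * d) * t) :=
      calc t * rexp (-w.re * t) ≤ t * rexp (-(s.re - d) * t) := by gcongr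
        _ = t * rexp (-d * t) * rexp (-(s.re - 2 * d) * t) := by
          rw [mul_assoc, ← Real.exp_add]
          ring_nf
        _ ≤ d⁻¹ * rexp (-(s.re - 2 * d) * t) := by
          gcongr
          exact mul_exp_neg_mul_le_inv hd t
    rw [norm_smul, norm_smul, norm_smul, norm_cexp_neg_mul_ofReal, norm_cexp_neg_mul_ofReal,
      norm_neg, norm_real, Real.norm_of_nonneg ht.le, ← mul_assoc, ← mul_assoc]
    simp only [sub_re, mul_re, re_ofNat, ofReal_re, im_ofNat, ofReal_im, mul_zero, sub_zero]
    gcongr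
  · have h := ((((hasDerivAt_id w).neg.mul_const (t : ℂ)).cexp).smul_const (f t))
    refine h.congr_deriv ?_
    simp [smul_smul, mul_comm]

theorem fourier_indicator_cexp_smul (f : ℝ → E) (c w : ℝ) :
    𝓕 ((Ioi (0 : ℝ)).indicator fun t ↦ cexp (-c * t) • f t) w =
      laplaceTransform f (c + (2 * π * w : ℝ) * I) := by
  rw [Real.fourier_real_eq_integral_exp_smul, laplaceTransform,
    ← integral_indicator measurableSet_Ioi]
  congr 1 with t
  by_cases ht : t ∈ Ioi (0 : ℝ)
  · simp only [indicator_of_mem ht, smul_smul, ← Complex.exp_add]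
    congr 2
    push_cast
    ring
  · simp [indicator_of_notMem ht]

theorem laplaceTransform_inversion [CompleteSpace E] {c t : ℝ} (hf : LaplaceConvergent f c)
    (hF : VerticalIntegrable (laplaceTransform f) c) (ht : 0 < t) (hft : ContinuousAt f t) :
    (2 * π)⁻¹ • ∫ y : ℝ, cexp ((c + y * I) * t) • laplaceTransform f (c + y * I) = f t := by
  let h : ℝ → E := (Ioi (0 : ℝ)).indicator fun u ↦ cexp (-c * u) • f u
  have hfourier : 𝓕 h = fun w : ℝ ↦ laplaceTransform f (c + (2 * π * w : ℝ) * I) :=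
    funext (fourier_indicator_cexp_smul f c)
  have hcont : ContinuousAt h t := by
    refine ((by fun_prop : ContinuousAt (fun u : ℝ ↦ cexp (-c * u)) t).smul hft).congr ?_
    filter_upwards [isOpen_Ioi.mem_nhds ht] with u hu
    exact (indicator_of_mem hu _).symm
  have hinv : 𝓕⁻ (𝓕 h) t = h t :=
    (IntegrableOn.integrable_indicator hf measurableSet_Ioi).fourierInv_fourier_eq
      (hfourier ▸ Integrable.comp_mul_left' hF (by positivity)) hcont
  have hscale := Measure.integral_comp_mul_left
    (fun y : ℝ ↦ cexp ((c + y * I) * t) • laplaceTransform f (c + y * I)) (2 * π)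
  rw [abs_of_pos (by positivity)] at hscale
  calc _ = ∫ w : ℝ, cexp ((c + (2 * π * w : ℝ) * I) * t) •
        laplaceTransform f (c + (2 * π * w : ℝ) * I) := hscale.symm
    _ = cexp (c * t) • 𝓕⁻ (𝓕 h) t := by
      rw [hfourier, Real.fourierInv_eq', ← integral_smul]
      congr 1 with w
      rw [smul_smul, ← Complex.exp_add]
      congr 2
      simp only [ofReal_mul, ofReal_ofNat, RCLike.inner_apply, ringHom_apply]
      ring
    _ = f t := by
      rw [hinv, show h t = _ from indicator_of_mem ht _, smul_smul, ← Complex.exp_add]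
      simp

theorem eqOn_re_gt_of_eventually_ofReal_eq [CompleteSpace E] {F G : ℂ → E} {c : ℝ}
    (hF : DifferentiableOn ℂ F {s : ℂ | c < s.re}) (hG : DifferentiableOn ℂ G {s : ℂ | c < s.re})
    (h : ∀ᶠ x : ℝ in atTop, F x = G x) : EqOn F G {s : ℂ | c < s.re} := by
  have hopen : IsOpen {s : ℂ | c < s.re} := isOpen_lt continuous_const continuous_re
  obtain ⟨x₀, hx₀⟩ := eventually_atTop.1 (h.and (eventually_gt_atTop c))
  have htend : Tendsto ((↑) : ℝ → ℂ) (𝓝[>] x₀) (𝓝[≠] (x₀ : ℂ)) :=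
    tendsto_nhdsWithin_iff.2 ⟨continuous_ofReal.continuousAt.mono_left nhdsWithin_le_nhds, by
      filter_upwards [self_mem_nhdsWithin] with x hx
      simpa using (mem_Ioi.1 hx).ne'⟩
  have hFan : AnalyticOnNhd ℂ F {s : ℂ | c < s.re} := hF.analyticOnNhd hopen
  have hGan : AnalyticOnNhd ℂ G {s : ℂ | c < s.re} := hG.analyticOnNhd hopen
  refine hFan.eqOn_of_preconnected_of_frequently_eq hGan
    (convex_halfSpace_re_gt c).isPreconnected (show c < (x₀ : ℂ).re from (hx₀ x₀ le_rfl).2)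
    (htend.frequently (Eventually.frequently ?_))
  filter_upwards [self_mem_nhdsWithin] with x hx
  exact (hx₀ x (mem_Ioi.1 hx).le).1

section VerticalLines

variable {G : ℂ → E} {a b : ℝ} {φ : ℝ → ℝ}

theorem tendsto_integral_horizontal_zero {l : Filter ℝ} (hl : Tendsto abs l atTop)
    (hφ : Tendsto φ atTop (𝓝 0)) (hG : ∀ s : ℂ, s.re ∈ uIcc a b → ‖G s‖ ≤ φ |s.im|) :
    Tendsto (fun y : ℝ ↦ ∫ x in a..b, G (x + y * I)) l (𝓝 0) := by
  refine squeeze_zero_norm (fun y ↦ ?_)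
    (by simpa using (hφ.comp hl).mul_const |b - a|)
  exact intervalIntegral.norm_integral_le_of_norm_le_const fun x hx ↦ by
    simpa using hG (x + y * I) (by simpa using uIoc_subset_uIcc hx)

theorem integral_vertical_eq_integral_vertical (ha : VerticalIntegrable G a)
    (hb : VerticalIntegrable G b)
    (hdiff : DifferentiableOn ℂ G {s : ℂ | s.re ∈ uIcc a b})
    (hφ : Tendsto φ atTop (𝓝 0)) (hG : ∀ s : ℂ, s.re ∈ uIcc a b → ‖G s‖ ≤ φ |s.im|) :
    ∫ y : ℝ, G (a + y * I) = ∫ y : ℝ, G (b + y * I) := by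
  have hrect (T : ℝ) : (∫ x in a..b, G (x + (-T : ℝ) * I)) - (∫ x in a..b, G (x + T * I)) +
      I • (∫ y in (-T)..T, G (b + y * I)) - I • (∫ y in (-T)..T, G (a + y * I)) = 0 := by
    simpa using integral_boundary_rect_eq_zero_of_differentiableOn G
      (a + (-T : ℝ) * I) (b + T * I) (hdiff.mono fun s hs ↦ by simpa using (mem_reProdIm.1 hs).1)
  have hline {c : ℝ} (hc : Integrable fun y : ℝ ↦ G (c + y * I)) : Tendsto
      (fun T : ℝ ↦ ∫ y in (-T)..T, G (c + y * I)) atTop (𝓝 (∫ y : ℝ, G (c + y * I))) :=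
    intervalIntegral_tendsto_integral hc tendsto_neg_atTop_atBot tendsto_id
  have hbottom := (tendsto_integral_horizontal_zero tendsto_abs_atBot_atTop hφ hG).comp
    tendsto_neg_atTop_atBot
  have htop := tendsto_integral_horizontal_zero tendsto_abs_atTop_atTop hφ hG
  have hlim := ((hbottom.sub htop).add ((hline hb).const_smul I)).sub ((hline ha).const_smul I)
  have hzero := tendsto_nhds_unique (hlim.congr hrect) tendsto_const_nhds
  rw [sub_zero, zero_add, ← smul_sub, smul_eq_zero] at hzero
  exact (sub_eq_zero.1 (hzero.resolve_left I_ne_zero)).symm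

end VerticalLines

theorem tendsto_one_add_rpow_neg_atTop {p : ℝ} (hp : 0 < p) :
    Tendsto (fun T : ℝ ↦ (1 + T) ^ (-p)) atTop (𝓝 0) :=
  (tendsto_rpow_neg_atTop hp).comp (tendsto_atTop_add_const_left _ _ tendsto_id)

theorem integral_vertical_cexp_smul_eq {F : ℂ → E} {a b p K t : ℝ} (hab : a ≤ b)
    (hp : 1 < p) (ht : 0 ≤ t) (hF : DifferentiableOn ℂ F {s : ℂ | a ≤ s.re})
    (hK : ∀ s : ℂ, a ≤ s.re → ‖F s‖ ≤ K * (1 + |s.im|) ^ (-p)) :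
    ∫ y : ℝ, cexp ((a + y * I) * t) • F (a + y * I) =
      ∫ y : ℝ, cexp ((b + y * I) * t) • F (b + y * I) := by
  let G : ℂ → E := fun s ↦ cexp (s * t) • F s
  have hdiff : DifferentiableOn ℂ G {s : ℂ | a ≤ s.re} :=
    (by fun_prop : Differentiable ℂ fun s : ℂ ↦ cexp (s * t)).differentiableOn.smul hF
  have hle (s : ℂ) (has : a ≤ s.re) (hsb : s.re ≤ b) :
      ‖G s‖ ≤ rexp (b * t) * K * (1 + |s.im|) ^ (-p) := by
    have hexp : ‖cexp (s * t)‖ ≤ rexp (b * t) := by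
      rw [Complex.norm_exp, re_mul_ofReal]
      gcongr
    rw [norm_smul, mul_assoc]
    exact mul_le_mul hexp (hK s has) (norm_nonneg _) (Real.exp_pos _).le
  refine integral_vertical_eq_integral_vertical (G := G)
    (φ := fun T ↦ rexp (b * t) * K * (1 + T) ^ (-p))
    (verticalIntegrable_of_norm_le hp (hdiff.continuousOn.mono fun s hs ↦ hs.ge)
      fun s hs ↦ hle s hs.ge (hs.trans_le hab))
    (verticalIntegrable_of_norm_le hp (hdiff.continuousOn.mono fun s hs ↦ hab.trans_eq hs.symm)
      fun s hs ↦ hle s (hab.trans_eq hs.symm) hs.le)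
    (hdiff.mono fun s hs ↦ (uIcc_of_le hab ▸ hs).1) ?_ fun s hs ↦ ?_
  · simpa using (tendsto_one_add_rpow_neg_atTop (by linarith)).const_mul (rexp (b * t) * K)
  · rw [uIcc_of_le hab] at hs
    exact hle s hs.1 hs.2

/- The inversion integral along `re s = b` is moved to `re s = a`, where `|exp (s * t)|` equals
`exp (a * t)`. -/
theorem exists_norm_le_exp_of_laplaceTransform_eq [CompleteSpace E] {F : ℂ → E} {a b p K : ℝ}
    (hab : a ≤ b) (hp : 1 < p) (hfc : ContinuousOn f (Ioi 0)) (hfb : LaplaceConvergent f b)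
    (hfF : ∀ y : ℝ, laplaceTransform f (b + y * I) = F (b + y * I))
    (hF : DifferentiableOn ℂ F {s : ℂ | a ≤ s.re})
    (hK : ∀ s : ℂ, a ≤ s.re → ‖F s‖ ≤ K * (1 + |s.im|) ^ (-p)) :
    ∃ C, ∀ t : ℝ, 0 < t → ‖f t‖ ≤ C * rexp (a * t) := by
  have hvert : VerticalIntegrable F b :=
    verticalIntegrable_of_norm_le hp (hF.continuousOn.mono fun s hs ↦ hab.trans_eq hs.symm)
      fun s hs ↦ hK s (hab.trans_eq hs.symm)
  refine ⟨(2 * π)⁻¹ * ∫ y : ℝ, ‖F (a + y * I)‖, fun t ht ↦ ?_⟩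
  have hinv : f t = (2 * π)⁻¹ • ∫ y : ℝ, cexp ((a + y * I) * t) • F (a + y * I) := by
    rw [integral_vertical_cexp_smul_eq hab hp ht.le hF hK,
      ← laplaceTransform_inversion hfb (by simpa only [VerticalIntegrable, hfF] using hvert) ht
        (hfc.continuousAt (isOpen_Ioi.mem_nhds ht))]
    simp only [hfF]
  have hnorm (y : ℝ) :
      ‖cexp ((a + y * I) * t) • F (a + y * I)‖ = rexp (a * t) * ‖F (a + y * I)‖ := by
    simp [norm_smul, Complex.norm_exp]
  calc ‖f t‖ ≤ (2 * π)⁻¹ * ∫ y : ℝ, ‖cexp ((a + y * I) * t) • F (a + y * I)‖ := by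
        rw [hinv, norm_smul, Real.norm_of_nonneg (by positivity)]
        gcongr
        exact norm_integral_le_integral_norm _
    _ = (2 * π)⁻¹ * (∫ y : ℝ, ‖F (a + y * I)‖) * rexp (a * t) := by
        simp only [hnorm, integral_const_mul]
        ring

end Laplace

section TermwiseLaplace

open Set Filter

variable {E ι : Type*} [NormedAddCommGroup E] [Countable ι]

theorem integrable_of_hasSum {α : Type*} [MeasurableSpace α] {μ : Measure α} {F : ι → α → E}
    {f : α → E} (hF : ∀ i, Integrable (F i) μ) (hsum : Summable fun i ↦ ∫ a, ‖F i a‖ ∂μ)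
    (hf : ∀ᵐ a ∂μ, HasSum (F · a) (f a)) : Integrable f μ := by
  have hmeas : AEStronglyMeasurable f μ := aestronglyMeasurable_of_tendsto_ae atTop
    (f := fun (s : Finset ι) a ↦ ∑ i ∈ s, F i a)
    (fun s ↦ s.aestronglyMeasurable_fun_sum fun i _ ↦ (hF i).1) hf
  refine ⟨hmeas, ?_⟩
  calc ∫⁻ a, ‖f a‖ₑ ∂μ ≤ ∫⁻ a, ∑' i, ‖F i a‖ₑ ∂μ := by
        refine lintegral_mono_ae ?_
        filter_upwards [hf] with a ha
        exact ha.tsum_eq ▸ enorm_tsum_le_tsum_enorm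
    _ = ∑' i, ENNReal.ofReal (∫ a, ‖F i a‖ ∂μ) := by
        rw [lintegral_tsum fun i ↦ (hF i).1.enorm]
        congr 1 with i
        rw [ofReal_integral_norm_eq_lintegral_enorm (hF i)]
    _ < ⊤ := hsum.tsum_ofReal_lt_top

variable [NormedSpace ℂ E] {f : ℝ → E} {x : ℝ}

theorem cexp_smul_rpow_smul (p x t : ℝ) (v : E) :
    cexp (-x * t) • ((t ^ (p - 1) : ℝ) : ℂ) • v =
      ((t ^ (p - 1) * rexp (-(x * t)) : ℝ) : ℂ) • v := by
  rw [smul_smul]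
  push_cast
  ring_nf

theorem laplaceConvergent_rpow_smul {p : ℝ} (hp : 0 < p) (hx : 0 < x) (v : E) :
    LaplaceConvergent (fun t : ℝ ↦ ((t ^ (p - 1) : ℝ) : ℂ) • v) x := by
  have h := integrableOn_rpow_mul_exp_neg_mul_rpow (p := 1) (s := p - 1) (by linarith) one_pos hx
  simp only [Real.rpow_one, neg_mul] at h
  simp only [LaplaceConvergent, cexp_smul_rpow_smul]
  exact (Integrable.ofReal h).smul_const v

theorem laplaceTransform_rpow_smul [CompleteSpace E] {p : ℝ} (hp : 0 < p) (hx : 0 < x) (v : E) :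
    laplaceTransform (fun t : ℝ ↦ ((t ^ (p - 1) : ℝ) : ℂ) • v) x =
      (((1 / x) ^ p * Real.Gamma p : ℝ) : ℂ) • v := by
  simp only [laplaceTransform, cexp_smul_rpow_smul]
  rw [integral_smul_const, integral_complex_ofReal, Real.integral_rpow_mul_exp_neg_mul_Ioi hp hx]

theorem integral_norm_cexp_smul_rpow_smul {p : ℝ} (hp : 0 < p) (hx : 0 < x) (v : E) :
    ∫ t in Ioi (0 : ℝ), ‖cexp (-x * t) • ((t ^ (p - 1) : ℝ) : ℂ) • v‖ =
      (1 / x) ^ p * Real.Gamma p * ‖v‖ := by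
  rw [← Real.integral_rpow_mul_exp_neg_mul_Ioi hp hx, ← integral_mul_const]
  refine setIntegral_congr_fun measurableSet_Ioi fun t (ht : 0 < t) ↦ ?_
  simp only [cexp_smul_rpow_smul, norm_smul, norm_real]
  rw [Real.norm_of_nonneg (by positivity)]

variable {p : ι → ℝ} {a : ι → E}

theorem laplaceConvergent_of_hasSum_rpow_smul (hp : ∀ i, 0 < p i) (hx : 0 < x)
    (hsum : Summable fun i ↦ (1 / x) ^ p i * Real.Gamma (p i) * ‖a i‖)
    (hf : ∀ t : ℝ, 0 < t → HasSum (fun i ↦ ((t ^ (p i - 1) : ℝ) : ℂ) • a i) (f t)) :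
    LaplaceConvergent f x := by
  refine integrable_of_hasSum (fun i ↦ laplaceConvergent_rpow_smul (hp i) hx (a i))
    (by simpa only [integral_norm_cexp_smul_rpow_smul (hp _) hx] using hsum) ?_
  filter_upwards [ae_restrict_mem measurableSet_Ioi] with t ht
  exact (hf t ht).const_smul _

theorem hasSum_laplaceTransform_of_hasSum_rpow_smul [CompleteSpace E] (hp : ∀ i, 0 < p i)
    (hx : 0 < x) (hsum : Summable fun i ↦ (1 / x) ^ p i * Real.Gamma (p i) * ‖a i‖)
    (hf : ∀ t : ℝ, 0 < t → HasSum (fun i ↦ ((t ^ (p i - 1) : ℝ) : ℂ) • a i) (f t)) :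
    HasSum (fun i ↦ (((1 / x) ^ p i * Real.Gamma (p i) : ℝ) : ℂ) • a i)
      (laplaceTransform f x) := by
  have h := hasSum_integral_of_summable_integral_norm
    (fun i ↦ laplaceConvergent_rpow_smul (hp i) hx (a i))
    (by simpa only [integral_norm_cexp_smul_rpow_smul (hp _) hx] using hsum)
  convert h using 1
  · ext i
    exact (laplaceTransform_rpow_smul (hp i) hx (a i)).symm
  · refine setIntegral_congr_fun measurableSet_Ioi fun t ht ↦ ?_
    exact ((hf t ht).const_smul _).tsum_eq.symm

end TermwiseLaplace

section Binomial

theorem factorial_mul_multichoose {K : Type*} [Field K] [CharZero K] (r : K) (n : ℕ) :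
    n.factorial * Ring.multichoose r n = (ascPochhammer K n).eval r := by
  rw [← nsmul_eq_mul, Ring.factorial_nsmul_multichoose_eq_ascPochhammer,
    Polynomial.ascPochhammer_smeval_cast, Polynomial.ascPochhammer_smeval_eq_eval]

theorem succ_mul_multichoose_succ {K : Type*} [Field K] [CharZero K] (r : K) (n : ℕ) :
    (n + 1) * Ring.multichoose r (n + 1) = r * Ring.multichoose (r + 1) n := by
  have hn : (n.factorial : K) ≠ 0 := Nat.cast_ne_zero.2 n.factorial_ne_zero
  apply mul_left_cancel₀ hn
  have h := factorial_mul_multichoose r (n + 1)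
  rw [ascPochhammer_succ_left, Polynomial.eval_mul, Polynomial.eval_X, Polynomial.eval_comp,
    Polynomial.eval_add, Polynomial.eval_X, Polynomial.eval_one, ← factorial_mul_multichoose,
    Nat.factorial_succ] at h
  push_cast at h
  linear_combination h

theorem ofReal_multichoose (r : ℝ) (n : ℕ) :
    ((Ring.multichoose r n : ℝ) : ℂ) = Ring.multichoose (r : ℂ) n :=
  Ring.map_multichoose ofRealHom r n

theorem multichoose_eq_Gamma_div {r : ℝ} (hr : 0 < r) (n : ℕ) :
    Ring.multichoose r n = Real.Gamma (r + n) / (n.factorial * Real.Gamma r) := by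
  have h := Complex.Gamma_add_nat_div_Gamma_eq (n := n) (r : ℂ) fun k hk ↦ by
    have : r = -k := by exact_mod_cast hk
    linarith [k.cast_nonneg (α := ℝ)]
  rw [← factorial_mul_multichoose, ← ofReal_multichoose, ← ofReal_natCast, ← ofReal_add,
    Complex.Gamma_ofReal, Complex.Gamma_ofReal] at h
  have hreal : Real.Gamma (r + n) / Real.Gamma r = n.factorial * Ring.multichoose r n := by
    exact_mod_cast h
  rw [div_mul_eq_div_div_swap, hreal, mul_div_cancel_left₀ _ (by positivity)]

theorem multichoose_nonneg_of_pos {r : ℝ} (hr : 0 < r) (n : ℕ) : 0 ≤ Ring.multichoose r n := by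
  rw [multichoose_eq_Gamma_div hr]
  positivity

theorem hasSum_multichoose_mul_pow (a : ℂ) {z : ℂ} (hz : ‖z‖ < 1) :
    HasSum (fun n : ℕ ↦ Ring.multichoose a n * z ^ n) (1 / (1 - z) ^ a) := by
  have h := (Complex.one_div_one_sub_cpow_hasFPowerSeriesOnBall_zero a).hasSum (y := z)
    (by simpa [enorm_eq_nnnorm, ← NNReal.coe_lt_coe] using hz)
  simpa [FormalMultilinearSeries.ofScalars, Ring.multichoose_eq] using h

theorem summable_multichoose_mul_pow (a : ℝ) {x : ℝ} (hx : |x| < 1) :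
    Summable fun n : ℕ ↦ Ring.multichoose a n * x ^ n := by
  have h := (hasSum_multichoose_mul_pow a (z := x) (by simpa using hx)).summable
  exact_mod_cast (by simpa only [← ofReal_multichoose] using h :
    Summable fun n : ℕ ↦ ((Ring.multichoose a n : ℝ) : ℂ) * (x : ℂ) ^ n)

end Binomial

section PrabhakarSeries

open Set Filter

variable {α β γ : ℝ}

theorem rpow_mul_exp_neg_le_Gamma {x R : ℝ} (hx : 1 ≤ x) (hR : 0 < R) :
    R ^ (x - 1) * rexp (-R) ≤ Real.Gamma x := by
  have hconv := Real.GammaIntegral_convergent (s := x) (by linarith)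
  rw [Real.Gamma_eq_integral (by linarith), ← integral_exp_neg_Ioi R, ← integral_const_mul]
  calc ∫ t in Ioi R, R ^ (x - 1) * rexp (-t)
      ≤ ∫ t in Ioi R, rexp (-t) * t ^ (x - 1) := by
        refine setIntegral_mono_on ((integrableOn_exp_neg_Ioi R).const_mul _)
          (hconv.mono_set (Ioi_subset_Ioi hR.le)) measurableSet_Ioi fun t (ht : R < t) ↦ ?_
        rw [mul_comm]
        gcongr
    _ ≤ ∫ t in Ioi 0, rexp (-t) * t ^ (x - 1) := by
        refine setIntegral_mono_set hconv ?_ (Ioi_subset_Ioi hR.le).eventuallyLE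
        filter_upwards [ae_restrict_mem measurableSet_Ioi] with t (ht : 0 < t)
        positivity

/-- The Taylor coefficients of the Prabhakar function. The factor `Γ(γ + n) / (n! Γ(γ))` is written
as the binomial coefficient `Ring.multichoose γ n`. -/
noncomputable def prabhakarCoeff (α β γ : ℝ) (n : ℕ) : ℝ :=
  Ring.multichoose γ n / Real.Gamma (α * n + β)

theorem prabhakar_eq_tsum (α β : ℝ) (hγ : 0 < γ) (z : ℂ) :
    prabhakar α β γ z = ∑' n : ℕ, (prabhakarCoeff α β γ n : ℂ) * z ^ n := by
  rw [prabhakar, ← tsum_mul_left]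
  congr 1 with n
  rw [prabhakarCoeff, multichoose_eq_Gamma_div hγ]
  push_cast
  ring

theorem prabhakarCoeff_nonneg (hα : 0 < α) (hβ : 0 < β) (hγ : 0 < γ) (n : ℕ) :
    0 ≤ prabhakarCoeff α β γ n :=
  div_nonneg (multichoose_nonneg_of_pos hγ n) (Real.Gamma_nonneg_of_nonneg (by positivity))

/- As `Γ(α n + β)` dominates every `R ^ (α n)`, the radius of convergence is infinite. -/
theorem summable_prabhakarCoeff_mul_pow (hα : 0 < α) (hβ : 0 < β) (hγ : 0 < γ) {r : ℝ}
    (hr : 0 ≤ r) : Summable fun n : ℕ ↦ prabhakarCoeff α β γ n * r ^ n := by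
  set R : ℝ := (r + 1) ^ α⁻¹
  have hR : 0 < R := by positivity
  have hRα : R ^ α = r + 1 := Real.rpow_inv_rpow (by positivity) hα.ne'
  have hlt : |r / (r + 1)| < 1 := by
    rw [abs_of_nonneg (by positivity), div_lt_one (by positivity)]
    linarith
  refine ((summable_multichoose_mul_pow γ hlt).mul_left
    (R ^ (1 - β) * rexp R)).of_norm_bounded_eventually_nat ?_
  have htend : Tendsto (fun n : ℕ ↦ α * n + β) atTop atTop :=
    tendsto_atTop_add_const_right _ _ (tendsto_natCast_atTop_atTop.const_mul_atTop hα)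
  filter_upwards [htend.eventually_ge_atTop 1] with n hn
  have hcoeff := prabhakarCoeff_nonneg hα hβ hγ n
  have hchoose := multichoose_nonneg_of_pos hγ n
  rw [Real.norm_of_nonneg (by positivity)]
  calc prabhakarCoeff α β γ n * r ^ n
      ≤ Ring.multichoose γ n / (R ^ (α * n + β - 1) * rexp (-R)) * r ^ n := by
        rw [prabhakarCoeff]
        gcongr
        exact rpow_mul_exp_neg_le_Gamma hn hR
    _ = R ^ (1 - β) * rexp R * (Ring.multichoose γ n * (r / (r + 1)) ^ n) := by
        rw [← hRα, div_pow, ← Real.rpow_mul_natCast hR.le, Real.exp_neg,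
          show α * n + β - 1 = α * n - (1 - β) by ring, Real.rpow_sub hR]
        field_simp

theorem hasSum_prabhakar (hα : 0 < α) (hβ : 0 < β) (hγ : 0 < γ) (z : ℂ) :
    HasSum (fun n : ℕ ↦ (prabhakarCoeff α β γ n : ℂ) * z ^ n) (prabhakar α β γ z) := by
  rw [prabhakar_eq_tsum α β hγ]
  refine (Summable.of_norm ?_).hasSum
  convert summable_prabhakarCoeff_mul_pow hα hβ hγ (norm_nonneg z) using 2 with n
  rw [norm_mul, norm_pow, norm_real, Real.norm_of_nonneg (prabhakarCoeff_nonneg hα hβ hγ n)]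

theorem differentiable_prabhakar (hα : 0 < α) (hβ : 0 < β) (hγ : 0 < γ) :
    Differentiable ℂ (prabhakar α β γ) := by
  rw [funext (prabhakar_eq_tsum α β hγ)]
  intro z
  refine (differentiableOn_tsum_of_summable_norm
    (summable_prabhakarCoeff_mul_pow hα hβ hγ (by positivity : 0 ≤ ‖z‖ + 1))
    (fun n ↦ by fun_prop) Metric.isOpen_ball fun n w hw ↦ ?_).differentiableAt
      (Metric.isOpen_ball.mem_nhds (by simp : z ∈ Metric.ball (0 : ℂ) (‖z‖ + 1)))
  have hcoeff := prabhakarCoeff_nonneg hα hβ hγ n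
  rw [norm_mul, norm_pow, norm_real, Real.norm_of_nonneg hcoeff]
  gcongr
  exact (mem_ball_zero_iff.1 hw).le

theorem mul_prabhakarCoeff_add_one (hα : 0 < α) (hβ : 0 < β) (γ : ℝ) (n : ℕ) :
    (α * n + β) * prabhakarCoeff α (β + 1) γ n = prabhakarCoeff α β γ n := by
  have hpos : 0 < α * n + β := by positivity
  rw [prabhakarCoeff, prabhakarCoeff, ← add_assoc, Real.Gamma_add_one hpos.ne']
  field_simp

theorem succ_mul_prabhakarCoeff_succ (α β γ : ℝ) (n : ℕ) :
    (n + 1) * prabhakarCoeff α β γ (n + 1) = γ * prabhakarCoeff α (β + α) (γ + 1) n := by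
  have harg : α * (n + 1 : ℕ) + β = α * n + (β + α) := by
    push_cast
    ring
  rw [prabhakarCoeff, prabhakarCoeff, harg, mul_div_assoc', succ_mul_multichoose_succ,
    mul_div_assoc']

theorem prabhakar_recurrence (hα : 0 < α) (hβ : 0 < β) (hγ : 0 < γ) (z : ℂ) :
    prabhakar α β γ z = β * prabhakar α (β + 1) γ z +
      α * γ * z * prabhakar α (β + 1 + α) (γ + 1) z := by
  have hshift : HasSum (fun n : ℕ ↦ (α * n * prabhakarCoeff α (β + 1) γ n : ℂ) * z ^ n)
      (α * γ * z * prabhakar α (β + 1 + α) (γ + 1) z) := by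
    have hmul := (hasSum_prabhakar hα (by positivity : 0 < β + 1 + α)
      (by positivity : 0 < γ + 1) z).mul_left (α * γ * z : ℂ)
    refine (hasSum_nat_add_iff' 1).1 ?_
    rw [Finset.sum_range_one, Nat.cast_zero, mul_zero, zero_mul, zero_mul, sub_zero]
    refine hmul.congr_fun fun n ↦ ?_
    have h := congrArg ((↑) : ℝ → ℂ) (succ_mul_prabhakarCoeff_succ α (β + 1) γ n)
    push_cast at h ⊢
    linear_combination α * z ^ (n + 1) * h
  have hsum := ((hasSum_prabhakar hα (by positivity : 0 < β + 1) hγ z).mul_left (β : ℂ)).add hshift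
  refine (hasSum_prabhakar hα hβ hγ z).unique (hsum.congr_fun fun n ↦ ?_)
  rw [← mul_prabhakarCoeff_add_one hα hβ γ n]
  push_cast
  ring

end PrabhakarSeries

section Symbol

open Set Filter

variable {α β γ σ a : ℝ} {lam s : ℂ}

theorem ofReal_mul_cpow {r : ℝ} (hr : 0 < r) (z w : ℂ) : (r * z) ^ w = (r : ℂ) ^ w * z ^ w := by
  rcases eq_or_ne z 0 with rfl | hz
  · rcases eq_or_ne w 0 with rfl | hw <;> simp [*]
  have hr' : (r : ℂ) ≠ 0 := ofReal_ne_zero.2 hr.ne'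
  rw [cpow_def_of_ne_zero (mul_ne_zero hr' hz), cpow_def_of_ne_zero hr', cpow_def_of_ne_zero hz,
    Complex.log_ofReal_mul hr hz, ofReal_log hr.le, add_mul, Complex.exp_add]

theorem re_cpow_ofReal_pos (hα₀ : 0 ≤ α) (hα₁ : α ≤ 1) (hs : 0 < s.re) :
    0 < (s ^ (α : ℂ)).re := by
  have hs₀ : s ≠ 0 := fun h ↦ hs.ne' (by simp [h])
  have hle : |s.arg * α| ≤ |s.arg| := by
    rw [abs_mul, abs_of_nonneg hα₀]
    exact mul_le_of_le_one_right (abs_nonneg _) hα₁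
  have hlt := abs_lt.1 (hle.trans_lt (abs_arg_lt_pi_div_two_iff.2 (.inl hs)))
  rw [cpow_ofReal_re]
  exact mul_pos (Real.rpow_pos_of_pos (norm_pos_iff.2 hs₀) _) (Real.cos_pos_of_mem_Ioo hlt)

/-- The closed form of the Laplace transform of the Prabhakar kernel, in principal powers. -/
noncomputable def prabhakarSymbol (α β γ : ℝ) (lam s : ℂ) : ℂ :=
  s ^ ((α * γ - β : ℝ) : ℂ) / (s ^ (α : ℂ) + lam) ^ (γ : ℂ)

theorem prabhakarSymbol_ofReal (α β γ : ℝ) (lam : ℂ) {x : ℝ} (hx : 0 < x) :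
    prabhakarSymbol α β γ lam x =
      (((1 / x) ^ β : ℝ) : ℂ) * (1 / (1 - -lam * ((1 / x) ^ α : ℝ)) ^ (γ : ℂ)) := by
  have hxα : 0 < x ^ α := by positivity
  have hfactor : (x : ℂ) ^ (α : ℂ) + lam = (x ^ α : ℝ) * (1 - -lam * ((1 / x) ^ α : ℝ)) := by
    have hne : ((x ^ α : ℝ) : ℂ) ≠ 0 := ofReal_ne_zero.2 hxα.ne'
    rw [← ofReal_cpow hx.le, Real.div_rpow zero_le_one hx.le, Real.one_rpow, ofReal_div]
    field_simp
    simp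
  rw [prabhakarSymbol, hfactor, ofReal_mul_cpow hxα, ← ofReal_cpow hx.le, ← ofReal_cpow hxα.le,
    ← Real.rpow_mul hx.le, Real.rpow_sub hx, Real.div_rpow zero_le_one hx.le (z := β),
    Real.one_rpow]
  have hne : ((x ^ (α * γ) : ℝ) : ℂ) ≠ 0 := ofReal_ne_zero.2 (by positivity)
  push_cast
  field_simp

theorem differentiableOn_prabhakarSymbol (α β γ : ℝ) (hσ : 0 ≤ σ)
    (hslit : ∀ s : ℂ, σ < s.re → s ^ (α : ℂ) + lam ∈ slitPlane) :
    DifferentiableOn ℂ (prabhakarSymbol α β γ lam) {s : ℂ | σ < s.re} := by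
  intro s (hs : σ < s.re)
  have hs₀ : s ∈ slitPlane := .inl (hσ.trans_lt hs)
  have hne : (s ^ (α : ℂ) + lam) ^ (γ : ℂ) ≠ 0 := fun h ↦
    slitPlane_ne_zero (hslit s hs) ((cpow_eq_zero_iff _ _).1 h).1
  exact ((differentiableAt_id.cpow_const hs₀).div
    (((differentiableAt_id.cpow_const hs₀).add_const lam).cpow_const (hslit s hs))
    hne).differentiableWithinAt

theorem exists_mul_norm_rpow_le_norm_cpow_add (hα : 0 < α) (ha : 0 < a)
    (hne : ∀ s : ℂ, a ≤ s.re → s ^ (α : ℂ) + lam ≠ 0) :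
    ∃ c > 0, ∀ s : ℂ, a ≤ s.re → c * ‖s‖ ^ α ≤ ‖s ^ (α : ℂ) + lam‖ := by
  have hpos {s : ℂ} (hs : a ≤ s.re) : 0 < ‖s‖ ^ α :=
    Real.rpow_pos_of_pos (ha.trans_le (hs.trans (re_le_norm s))) _
  obtain ⟨R, hR⟩ := eventually_atTop.1 ((tendsto_rpow_atTop hα).eventually_ge_atTop (2 * ‖lam‖))
  obtain ⟨c, hc, hcK⟩ : ∃ c > 0, ∀ s ∈ Metric.closedBall (0 : ℂ) R ∩ {s | a ≤ s.re},
      c ≤ ‖s ^ (α : ℂ) + lam‖ / ‖s‖ ^ α := by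
    refine ((isCompact_closedBall (0 : ℂ) R).inter_right
      (isClosed_le continuous_const continuous_re)).exists_forall_le' (fun s hs ↦ ?_)
      fun s hs ↦ div_pos (norm_pos_iff.2 (hne s hs.2)) (hpos hs.2)
    have hcpow : ContinuousAt (fun s : ℂ ↦ s ^ (α : ℂ)) s :=
      continuousAt_cpow_const (.inl (ha.trans_le hs.2))
    exact ((hcpow.add_const lam).norm.div
      (continuousAt_id.norm.rpow_const (.inr hα.le)) (hpos hs.2).ne').continuousWithinAt
  refine ⟨min c (1 / 2), by positivity, fun s hs ↦ ?_⟩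
  rcases le_or_gt ‖s‖ R with hsR | hsR
  · rw [← le_div_iff₀ (hpos hs)]
    exact (min_le_left _ _).trans (hcK s ⟨by simpa using hsR, hs⟩)
  · calc min c (1 / 2) * ‖s‖ ^ α ≤ 1 / 2 * ‖s‖ ^ α := by gcongr; exact min_le_right _ _
      _ ≤ ‖s‖ ^ α - ‖lam‖ := by linarith [hR ‖s‖ hsR.le]
      _ ≤ ‖s ^ (α : ℂ) + lam‖ := by
        rw [← norm_cpow_real]
        simpa using norm_sub_norm_le (s ^ (α : ℂ)) (-lam)

theorem norm_prabhakarSymbol_le (β : ℝ) (hγ : 0 ≤ γ) {c : ℝ} (hc : 0 < c) (hs : s ≠ 0)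
    (hle : c * ‖s‖ ^ α ≤ ‖s ^ (α : ℂ) + lam‖) :
    ‖prabhakarSymbol α β γ lam s‖ ≤ c ^ (-γ) * ‖s‖ ^ (-β) := by
  have hs' : 0 < ‖s‖ := norm_pos_iff.2 hs
  rw [prabhakarSymbol, norm_div, norm_cpow_real, norm_cpow_real]
  calc ‖s‖ ^ (α * γ - β) / ‖s ^ (α : ℂ) + lam‖ ^ γ
      ≤ ‖s‖ ^ (α * γ - β) / (c * ‖s‖ ^ α) ^ γ := by gcongr
    _ = c ^ (-γ) * ‖s‖ ^ (-β) := by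
      rw [Real.mul_rpow hc.le (by positivity), ← Real.rpow_mul hs'.le, sub_eq_add_neg,
        Real.rpow_add hs', Real.rpow_neg hc.le]
      field_simp

theorem norm_rpow_neg_le_mul_one_add_abs_im {p : ℝ} (hp : 0 ≤ p) (ha : 0 < a) (hs : a ≤ s.re) :
    ‖s‖ ^ (-p) ≤ (1 + a⁻¹) ^ p * (1 + |s.im|) ^ (-p) := by
  have hle : 1 + |s.im| ≤ (1 + a⁻¹) * ‖s‖ := by
    have h : 1 ≤ a⁻¹ * ‖s‖ := (le_inv_mul_iff₀ ha).2 (by simpa using hs.trans (re_le_norm s))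
    linarith [abs_im_le_norm s]
  have hpow : (1 + |s.im|) ^ p ≤ (1 + a⁻¹) ^ p * ‖s‖ ^ p := by
    rw [← Real.mul_rpow (by positivity) (norm_nonneg s)]
    gcongr
  have hs' : 0 < ‖s‖ := ha.trans_le (hs.trans (re_le_norm s))
  rw [Real.rpow_neg hs'.le, Real.rpow_neg (by positivity), ← div_eq_mul_inv,
    le_div_iff₀ (by positivity), inv_mul_le_iff₀ (by positivity), mul_comm]
  exact hpow

theorem exists_norm_prabhakarSymbol_le (hα : 0 < α) (hβ : 0 ≤ β) (hγ : 0 ≤ γ) (ha : 0 < a)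
    (hne : ∀ s : ℂ, a ≤ s.re → s ^ (α : ℂ) + lam ≠ 0) :
    ∃ K, ∀ s : ℂ, a ≤ s.re → ‖prabhakarSymbol α β γ lam s‖ ≤ K * (1 + |s.im|) ^ (-β) := by
  obtain ⟨c, hc, hle⟩ := exists_mul_norm_rpow_le_norm_cpow_add hα ha hne
  refine ⟨c ^ (-γ) * (1 + a⁻¹) ^ β, fun s hs ↦ ?_⟩
  have hs₀ : s ≠ 0 := fun h ↦ (ha.trans_le hs).ne' (by simp [h])
  calc ‖prabhakarSymbol α β γ lam s‖ ≤ c ^ (-γ) * ‖s‖ ^ (-β) :=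
        norm_prabhakarSymbol_le β hγ hc hs₀ (hle s hs)
    _ ≤ c ^ (-γ) * ((1 + a⁻¹) ^ β * (1 + |s.im|) ^ (-β)) := by
        gcongr
        exact norm_rpow_neg_le_mul_one_add_abs_im hβ ha hs
    _ = c ^ (-γ) * (1 + a⁻¹) ^ β * (1 + |s.im|) ^ (-β) := (mul_assoc _ _ _).symm

end Symbol

section Kernel

open Set Filter Topology

variable {α β γ σ a x : ℝ} {lam s : ℂ}

/-- The convolution kernel `t ^ (β - 1) E^γ_{α,β}(-lam t ^ α)` attached to the Prabhakar function,
for `t > 0`. -/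
noncomputable def prabhakarKernel (α β γ : ℝ) (lam : ℂ) (t : ℝ) : ℂ :=
  (t : ℂ) ^ ((β : ℂ) - 1) * prabhakar α β γ (-lam * (t : ℂ) ^ (α : ℂ))

theorem prabhakarKernel_of_pos (α β γ : ℝ) (lam : ℂ) {t : ℝ} (ht : 0 < t) :
    prabhakarKernel α β γ lam t =
      ((t ^ (β - 1) : ℝ) : ℂ) * prabhakar α β γ (-lam * ((t ^ α : ℝ) : ℂ)) := by
  rw [prabhakarKernel, ofReal_cpow ht.le, ofReal_cpow ht.le]
  push_cast
  rfl

theorem continuousOn_prabhakarKernel (hα : 0 < α) (hβ : 0 < β) (hγ : 0 < γ) (lam : ℂ) :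
    ContinuousOn (prabhakarKernel α β γ lam) (Ioi 0) := by
  have hpow (z : ℂ) : ContinuousOn (fun t : ℝ ↦ (t : ℂ) ^ z) (Ioi 0) := fun t (ht : 0 < t) ↦
    (continuousAt_ofReal_cpow_const t z (.inr ht.ne')).continuousWithinAt
  exact (hpow _).mul
    ((differentiable_prabhakar hα hβ hγ).continuous.comp_continuousOn ((hpow _).const_mul _))

theorem hasSum_prabhakarKernel (hα : 0 < α) (hβ : 0 < β) (hγ : 0 < γ) (lam : ℂ) {t : ℝ}
    (ht : 0 < t) :
    HasSum (fun n : ℕ ↦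
        ((t ^ (α * n + β - 1) : ℝ) : ℂ) • ((prabhakarCoeff α β γ n : ℂ) * (-lam) ^ n))
      (prabhakarKernel α β γ lam t) := by
  rw [prabhakarKernel_of_pos α β γ lam ht]
  refine ((hasSum_prabhakar hα hβ hγ _).mul_left _).congr_fun fun n ↦ ?_
  rw [add_sub_assoc, Real.rpow_add ht, Real.rpow_mul_natCast ht.le, smul_eq_mul]
  push_cast
  ring

theorem mul_prabhakarKernel (hα : 0 < α) (hβ : 0 < β) (hγ : 0 < γ) (lam : ℂ) {t : ℝ}
    (ht : 0 < t) :
    t * prabhakarKernel α β γ lam t =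
      β * prabhakarKernel α (β + 1) γ lam t -
        α * γ * lam * prabhakarKernel α (β + 1 + α) (γ + 1) lam t := by
  simp only [prabhakarKernel_of_pos _ _ _ _ ht, prabhakar_recurrence hα hβ hγ]
  rw [show β + 1 - 1 = β - 1 + 1 by ring, show β + 1 + α - 1 = β - 1 + 1 + α by ring,
    Real.rpow_add ht _ α, Real.rpow_add ht _ 1, Real.rpow_one]
  push_cast
  ring

theorem one_div_rpow_mul_Gamma_mul_prabhakarCoeff (hα : 0 < α) (hβ : 0 < β) (γ : ℝ) (hx : 0 < x)
    (n : ℕ) :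
    (1 / x) ^ (α * n + β) * Real.Gamma (α * n + β) * prabhakarCoeff α β γ n =
      (1 / x) ^ β * (Ring.multichoose γ n * ((1 / x) ^ α) ^ n) := by
  have hx' : 0 < 1 / x := by positivity
  have hΓ : Real.Gamma (α * n + β) ≠ 0 := (Real.Gamma_pos_of_pos (by positivity)).ne'
  rw [prabhakarCoeff, Real.rpow_add hx', Real.rpow_mul_natCast hx'.le]
  field_simp

theorem norm_neg_mul_one_div_rpow_lt_one (hx : 0 < x) (hlam : ‖lam‖ < x ^ α) :
    ‖-lam * (((1 / x) ^ α : ℝ) : ℂ)‖ < 1 := by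
  rw [norm_mul, norm_neg, norm_real, Real.norm_of_nonneg (by positivity),
    Real.div_rpow zero_le_one hx.le, Real.one_rpow, mul_one_div, div_lt_one (by positivity)]
  exact hlam

theorem summable_laplace_prabhakarKernel (hα : 0 < α) (hβ : 0 < β) (hγ : 0 < γ) (hx : 0 < x)
    (hlam : ‖lam‖ < x ^ α) :
    Summable fun n : ℕ ↦ (1 / x) ^ (α * n + β) * Real.Gamma (α * n + β) *
      ‖(prabhakarCoeff α β γ n : ℂ) * (-lam) ^ n‖ := by
  have hlt := norm_neg_mul_one_div_rpow_lt_one hx hlam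
  refine ((summable_multichoose_mul_pow γ ((abs_norm _).trans_lt hlt)).mul_left
    ((1 / x) ^ β)).congr fun n ↦ ?_
  have hcoeff := prabhakarCoeff_nonneg hα hβ hγ n
  rw [norm_mul _ ((-lam) ^ n), norm_real (prabhakarCoeff α β γ n), Real.norm_of_nonneg hcoeff,
    ← mul_assoc _ (prabhakarCoeff α β γ n), one_div_rpow_mul_Gamma_mul_prabhakarCoeff hα hβ γ hx,
    norm_mul, norm_real, Real.norm_of_nonneg (by positivity : 0 ≤ (1 / x) ^ α), norm_pow]
  ring

theorem laplaceConvergent_prabhakarKernel_ofReal (hα : 0 < α) (hβ : 0 < β) (hγ : 0 < γ)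
    (hx : 0 < x) (hlam : ‖lam‖ < x ^ α) :
    LaplaceConvergent (prabhakarKernel α β γ lam) x :=
  laplaceConvergent_of_hasSum_rpow_smul (fun n ↦ by positivity) hx
    (summable_laplace_prabhakarKernel hα hβ hγ hx hlam)
    fun _ ht ↦ hasSum_prabhakarKernel hα hβ hγ lam ht

theorem laplaceTransform_prabhakarKernel_ofReal (hα : 0 < α) (hβ : 0 < β) (hγ : 0 < γ)
    (hx : 0 < x) (hlam : ‖lam‖ < x ^ α) :
    laplaceTransform (prabhakarKernel α β γ lam) x = prabhakarSymbol α β γ lam x := by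
  have hlap := hasSum_laplaceTransform_of_hasSum_rpow_smul (fun n ↦ by positivity) hx
    (summable_laplace_prabhakarKernel hα hβ hγ hx hlam)
    fun _ ht ↦ hasSum_prabhakarKernel hα hβ hγ lam ht
  have hbinom := (hasSum_multichoose_mul_pow γ
    (norm_neg_mul_one_div_rpow_lt_one hx hlam)).mul_left (((1 / x) ^ β : ℝ) : ℂ)
  rw [prabhakarSymbol_ofReal α β γ lam hx]
  refine hlap.unique (hbinom.congr_fun fun n ↦ ?_)
  rw [smul_eq_mul, ← mul_assoc, ← ofReal_mul,
    one_div_rpow_mul_Gamma_mul_prabhakarCoeff hα hβ γ hx, ← ofReal_multichoose]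
  push_cast
  ring

theorem eventually_norm_lt_rpow (hα : 0 < α) (lam : ℂ) : ∀ᶠ x : ℝ in atTop, ‖lam‖ < x ^ α :=
  (tendsto_rpow_atTop hα).eventually_gt_atTop _

theorem eqOn_laplaceTransform_prabhakarKernel {c : ℝ} (hα : 0 < α) (hβ : 0 < β) (hγ : 0 < γ)
    (hc : 0 ≤ c) (hslit : ∀ s : ℂ, c < s.re → s ^ (α : ℂ) + lam ∈ slitPlane)
    (hconv : ∀ s : ℂ, c < s.re → LaplaceConvergent (prabhakarKernel α β γ lam) s) :
    EqOn (laplaceTransform (prabhakarKernel α β γ lam)) (prabhakarSymbol α β γ lam)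
      {s | c < s.re} := by
  refine eqOn_re_gt_of_eventually_ofReal_eq (differentiableOn_laplaceTransform hconv)
    (differentiableOn_prabhakarSymbol α β γ hc hslit) ?_
  filter_upwards [eventually_norm_lt_rpow hα lam, eventually_gt_atTop 0] with x hlam hx
  exact laplaceTransform_prabhakarKernel_ofReal hα hβ hγ hx hlam

theorem exists_norm_prabhakarKernel_le (hα : 0 < α) (hβ : 1 < β) (hγ : 0 < γ) (hσ : 0 ≤ σ)
    (hslit : ∀ s : ℂ, σ < s.re → s ^ (α : ℂ) + lam ∈ slitPlane) (ha : σ < a) :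
    ∃ C, ∀ t : ℝ, 0 < t → ‖prabhakarKernel α β γ lam t‖ ≤ C * rexp (a * t) := by
  have hβ₀ : 0 < β := one_pos.trans hβ
  have ha₀ : 0 < a := hσ.trans_lt ha
  obtain ⟨x, hlam, hax⟩ :=
    ((eventually_norm_lt_rpow hα lam).and (eventually_ge_atTop a)).exists
  have hconv : ∀ s : ℂ, x ≤ s.re → LaplaceConvergent (prabhakarKernel α β γ lam) s := fun s hs ↦
    (laplaceConvergent_prabhakarKernel_ofReal hα hβ₀ hγ (ha₀.trans_le hax) hlam).mono
      (by simpa using hs)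
  have heq := eqOn_laplaceTransform_prabhakarKernel hα hβ₀ hγ (ha₀.le.trans hax)
    (fun s hs ↦ hslit s (ha.trans_le (hax.trans hs.le))) fun s hs ↦ hconv s hs.le
  obtain ⟨K, hK⟩ := exists_norm_prabhakarSymbol_le hα hβ₀.le hγ.le ha₀ fun s hs ↦
    slitPlane_ne_zero (hslit s (ha.trans_le hs))
  exact exists_norm_le_exp_of_laplaceTransform_eq (b := x + 1) (by linarith) hβ
    (continuousOn_prabhakarKernel hα hβ₀ hγ lam) (hconv _ (by simp))
    (fun y ↦ heq (by simp))
    ((differentiableOn_prabhakarSymbol α β γ hσ hslit).mono fun s hs ↦ ha.trans_le hs) hK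

theorem laplaceConvergent_prabhakarKernel (hα : 0 < α) (hβ : 0 < β) (hγ : 0 < γ) (hσ : 0 ≤ σ)
    (hslit : ∀ s : ℂ, σ < s.re → s ^ (α : ℂ) + lam ∈ slitPlane) (hs : σ < s.re) :
    LaplaceConvergent (prabhakarKernel α β γ lam) s := by
  obtain ⟨a, hσa, has⟩ := exists_between hs
  obtain ⟨C₁, hC₁⟩ := exists_norm_prabhakarKernel_le hα (by linarith : 1 < β + 1) hγ hσ hslit hσa
  obtain ⟨C₂, hC₂⟩ := exists_norm_prabhakarKernel_le hα (by linarith : 1 < β + 1 + α)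
    (by linarith : 0 < γ + 1) hσ hslit hσa
  obtain ⟨x, hlam, hx⟩ := ((eventually_norm_lt_rpow hα lam).and (eventually_gt_atTop 0)).exists
  refine (laplaceConvergent_prabhakarKernel_ofReal hα hβ hγ hx hlam).of_norm_le_exp
    (C := β * C₁ + α * γ * ‖lam‖ * C₂) (fun t ht ↦ ?_) has
  have ht₀ : 0 < t := one_pos.trans_le ht
  calc ‖prabhakarKernel α β γ lam t‖ ≤ t * ‖prabhakarKernel α β γ lam t‖ :=
        le_mul_of_one_le_left (norm_nonneg _) ht
    _ = ‖t * prabhakarKernel α β γ lam t‖ := by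
        rw [norm_mul, norm_real, Real.norm_of_nonneg ht₀.le]
    _ ≤ β * ‖prabhakarKernel α (β + 1) γ lam t‖ +
          α * γ * ‖lam‖ * ‖prabhakarKernel α (β + 1 + α) (γ + 1) lam t‖ := by
        rw [mul_prabhakarKernel hα hβ hγ lam ht₀]
        refine (norm_sub_le _ _).trans_eq ?_
        simp only [norm_mul, norm_real, Real.norm_of_nonneg, hα.le, hβ.le, hγ.le]
    _ ≤ β * (C₁ * rexp (a * t)) + α * γ * ‖lam‖ * (C₂ * rexp (a * t)) := by
        gcongr
        · exact hC₁ t ht₀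
        · exact hC₂ t ht₀
    _ = (β * C₁ + α * γ * ‖lam‖ * C₂) * rexp (a * t) := by ring

end Kernel

theorem stmt_9_general {α β γ σ : ℝ} {lam : ℂ} (hα : 0 < α) (hβ : 0 < β) (hγ : 0 < γ)
    (hσ : 0 ≤ σ) (hslit : ∀ s : ℂ, σ < s.re → s ^ (α : ℂ) + lam ∈ slitPlane) {s : ℂ}
    (hs : σ < s.re) :
    LaplaceConvergent (prabhakarKernel α β γ lam) s ∧
      laplaceTransform (prabhakarKernel α β γ lam) s =
        s ^ ((α * γ - β : ℝ) : ℂ) / (s ^ (α : ℂ) + lam) ^ (γ : ℂ) := by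
  have hconv {w : ℂ} (hw : σ < w.re) : LaplaceConvergent (prabhakarKernel α β γ lam) w :=
    laplaceConvergent_prabhakarKernel hα hβ hγ hσ hslit hw
  exact ⟨hconv hs,
    eqOn_laplaceTransform_prabhakarKernel hα hβ hγ hσ hslit (fun _ hw ↦ hconv hw) hs⟩

theorem stmt_9 (α β γ lam : ℝ) (hα0 : 0 < α) (hα1 : α < 1) (hβ : 0 < β) (hγ : 0 < γ)
    (hlam : 0 < lam) :
    ∀ s : ℂ, 0 < s.re →
      ∫ t in Set.Ioi (0 : ℝ),
          Complex.exp (-s * t) * (t : ℂ) ^ ((β : ℂ) - 1) *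
            prabhakar α β γ (-(lam : ℂ) * (t : ℂ) ^ (α : ℂ)) =
        s ^ ((α * γ - β : ℝ) : ℂ) / (s ^ (α : ℂ) + (lam : ℂ)) ^ (γ : ℂ) := by
  intro s hs
  have hslit (w : ℂ) (hw : 0 < w.re) : w ^ (α : ℂ) + lam ∈ slitPlane :=
    .inl (by simpa using add_pos (re_cpow_ofReal_pos hα0.le hα1.le hw) hlam)
  simpa only [laplaceTransform, prabhakarKernel, smul_eq_mul, mul_assoc] using
    (stmt_9_general hα0 hβ hγ le_rfl hslit hs).2
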